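/- arXiv:1406.4852 — 2 statements merged into one kernel-verified Lean document; each statement's English description precedes it below -/
import Mathlib

section
/- Let (M, (W_j), (S_i^j)) be an exact-repair regenerating code with parameters (n,k,d) and secondary parameters (B,α,β). Then for every integer q with 0 ≤ q ≤ k one has B ≤ B_q, i.e. B ≤ qα + ((k−q)(k−q−1)/2)β + (d+1−k)(k−q)β. -/
open Finset

/-- Shannon entropy (base 2) of a finitely-valued random variable `X` on a finite
probability space with mass function `P`. -/
noncomputable def entH {Ω S : Type*} [Fintype Ω] (P : Ω → ℝ) (X : Ω → S) : ℝ :=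
  letI := Classical.decEq S
  ∑ s ∈ Finset.univ.image X,
    -((∑ ω ∈ Finset.univ.filter (fun ω => X ω = s), P ω) *
       Real.logb 2 (∑ ω ∈ Finset.univ.filter (fun ω => X ω = s), P ω))

/-- Conditional entropy `H(X | Y) = H(X, Y) - H(Y)`. -/
noncomputable def condH {Ω S T : Type*} [Fintype Ω] (P : Ω → ℝ) (X : Ω → S) (Y : Ω → T) : ℝ :=
  entH P (fun ω => (X ω, Y ω)) - entH P Y

/-- The joint random variable `W_J = (W_j : j ∈ J)`. -/
def jointW {Ω : Type*} {n : ℕ} {σW : Fin n → Type*} (W : ∀ j, Ω → σW j)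
    (J : Finset (Fin n)) : Ω → ∀ j : J, σW j.1 :=
  fun ω j => W j.1 ω

/-- The joint random variable `(S_i^j : (i,j) ∈ E)` for a set `E` of pairs. -/
def jointS {Ω : Type*} {n : ℕ} {σS : Fin n → Fin n → Type*} (S : ∀ i j, Ω → σS i j)
    (E : Finset (Fin n × Fin n)) : Ω → ∀ e : E, σS e.1.1 e.1.2 :=
  fun ω e => S e.1.1 e.1.2 ω

/-- The joint random variable `S_I^j = (S_i^j : i ∈ I)`. -/
def jointSto {Ω : Type*} {n : ℕ} {σS : Fin n → Fin n → Type*} (S : ∀ i j, Ω → σS i j)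
    (I : Finset (Fin n)) (j : Fin n) : Ω → ∀ i : I, σS i.1 j :=
  fun ω i => S i.1 j ω

/-- An exact-repair regenerating code with parameters `(n,k,d)` (with `1 ≤ k ≤ d ≤ n-1`)
and secondary parameters `(B,α,β)`: the file `M`, the stored data `W j` on server `j`
(servers indexed by `Fin n`, server `j` of the paper being index `j-1`), and the helper
information `S i j` sent from server `i` to repair server `j`. -/
structure IsRegenCode {Ω : Type*} [Fintype Ω] (n k d : ℕ) (B α β : ℝ) (P : Ω → ℝ)
    {σM : Type*} {σW : Fin n → Type*} {σS : Fin n → Fin n → Type*}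
    (M : Ω → σM) (W : ∀ j, Ω → σW j) (S : ∀ i j, Ω → σS i j) : Prop where
  prob_nonneg : ∀ ω, 0 ≤ P ω
  prob_sum : ∑ ω, P ω = 1
  hk : 1 ≤ k
  hkd : k ≤ d
  hdn : d + 1 ≤ n
  hB : 0 ≤ B
  hα : 0 ≤ α
  hβ : 0 ≤ β
  hMB : entH P M = B
  hWα : ∀ j, entH P (W j) = α
  hWM : ∀ j, condH P (W j) M = 0
  hMW : ∀ J : Finset (Fin n), k ≤ J.card → condH P M (jointW W J) = 0
  hSβ : ∀ i j, i ≠ j → entH P (S i j) = β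
  hSW : ∀ i j, i ≠ j → condH P (S i j) (W i) = 0
  hWS : ∀ (j : Fin n) (I : Finset (Fin n)), d ≤ I.card → j ∉ I →
    condH P (W j) (jointSto S I j) = 0

/-- `B_q = qα + ((k-q)(k-q-1)/2)β + (d+1-k)(k-q)β`. -/
noncomputable def Bfun (k d q : ℕ) (α β : ℝ) : ℝ :=
  (q : ℝ) * α + (((k - q) * (k - q - 1) : ℕ) : ℝ) / 2 * β
    + (((d + 1 - k) * (k - q) : ℕ) : ℝ) * β

/-!
List `k` servers. Their contents determine the file, so `B ≤ H(W_1, …, W_k)`. The first `q` servers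
contribute at most `α` each. For a later server `j`, the servers listed before it already determine
the helper data they would send to `j`, so `d - (j - 1)` further helper messages complete the repair
of `j`, and it contributes at most `(d - (j - 1)) β`. Summing over `q < j ≤ k` gives `B_q`.

On a finite probability space `H(X | Y) = 0` means that `Y` determines `X` on the set of outcomes of
positive mass; the decoding and repair conditions are used in this form, and the only other facts
about entropy needed are monotonicity and subadditivity.
-/

section Entropy

open scoped Classical in
/-- The law of the random variable `X`: its mass function on values, `s ↦ P(X = s)`. -/
noncomputable def law {Ω S : Type*} [Fintype Ω] (P : Ω → ℝ) (X : Ω → S) (s : S) : ℝ :=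
  ∑ ω with X ω = s, P ω

/-- `X` almost surely determines `Y`: some function of `X` agrees with `Y` at every outcome of
nonzero mass. -/
def Determines {Ω S T : Type*} (P : Ω → ℝ) (X : Ω → S) (Y : Ω → T) : Prop :=
  ∀ ⦃ω ω'⦄, P ω ≠ 0 → P ω' ≠ 0 → X ω = X ω' → Y ω = Y ω'

variable {Ω S T U : Type*} {P : Ω → ℝ} {X : Ω → S} {Y : Ω → T} {Z : Ω → U}

theorem Determines.comp_self (f : S → T) : Determines P X (fun ω => f (X ω)) :=
  fun _ _ _ _ h => congrArg f h

theorem Determines.trans (hXY : Determines P X Y) (hYZ : Determines P Y Z) : Determines P X Z :=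
  fun _ _ hω hω' h => hYZ hω hω' (hXY hω hω' h)

theorem Determines.pi {ι : Type*} {σ : ι → Type*} {F : ∀ i, Ω → σ i}
    (h : ∀ i, Determines P X (F i)) : Determines P X (fun ω i => F i ω) :=
  fun _ _ hω hω' hX => funext fun i => h i hω hω' hX

theorem Determines.apply {ι : Type*} {σ : ι → Type*} {F : ∀ i, Ω → σ i}
    (h : Determines P X fun ω i => F i ω) (i : ι) : Determines P X (F i) :=
  h.trans (.comp_self (Function.eval i))

theorem determines_insert {ι : Type*} [DecidableEq ι] {σ : ι → Type*} {F : ∀ i, Ω → σ i} {a : ι}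
    {s : Finset ι} (ha : Determines P X (F a)) (hs : Determines P X fun ω (i : s) => F i ω) :
    Determines P X fun ω (i : ↥(insert a s)) => F i ω := by
  refine .pi fun ⟨i, hi⟩ => ?_
  obtain rfl | hi := mem_insert.1 hi
  · exact ha
  · exact hs.apply (F := fun i : s => F i) ⟨i, hi⟩

variable [Fintype Ω]

theorem law_nonneg (hP : ∀ ω, 0 ≤ P ω) (s : S) : 0 ≤ law P X s :=
  sum_nonneg fun ω _ => hP ω

theorem law_pos (hP : ∀ ω, 0 ≤ P ω) {ω : Ω} (hω : P ω ≠ 0) : 0 < law P X (X ω) :=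
  sum_pos' (fun i _ => hP i) ⟨ω, by simp, (hP ω).lt_of_ne' hω⟩

open scoped Classical in
theorem law_eq_sum_support (s : S) : law P X s = ∑ ω with X ω = s ∧ P ω ≠ 0, P ω := by
  rw [law, ← sum_filter_ne_zero, filter_filter]

theorem sum_law_mul [DecidableEq S] (g : S → ℝ) :
    ∑ s ∈ univ.image X, law P X s * g s = ∑ ω, P ω * g (X ω) := by
  classical
  rw [← sum_fiberwise_of_maps_to fun ω _ => mem_image_of_mem X (mem_univ ω)]
  refine sum_congr rfl fun s _ => ?_
  rw [law, sum_mul]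
  refine sum_congr (by congr) fun ω hω => ?_
  rw [(mem_filter.1 hω).2]

theorem sum_law [DecidableEq S] : ∑ s ∈ univ.image X, law P X s = ∑ ω, P ω := by
  simpa using sum_law_mul (P := P) (X := X) 1

theorem entH_eq_neg_sum : entH P X = -∑ ω, P ω * Real.logb 2 (law P X (X ω)) := by
  classical
  rw [← sum_law_mul fun s => Real.logb 2 (law P X s), ← sum_neg_distrib]
  unfold entH law
  congr!

theorem entH_eq_zero_of_subsingleton [Subsingleton S] (hP_sum : ∑ ω, P ω = 1) : entH P X = 0 := by
  have law_eq_one (s : S) : law P X s = 1 := by simp [law, Subsingleton.elim _ s, hP_sum]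
  simp [entH_eq_neg_sum, law_eq_one]

theorem Determines.law_le_law (h : Determines P X Y) (hP : ∀ ω, 0 ≤ P ω) {ω : Ω} (hω : P ω ≠ 0) :
    law P X (X ω) ≤ law P Y (Y ω) := by
  classical
  rw [law_eq_sum_support, law_eq_sum_support]
  refine sum_le_sum_of_subset_of_nonneg (fun ω' => ?_) fun ω' _ _ => hP ω'
  simp only [mem_filter_univ]
  exact fun ⟨hX, hω'⟩ => ⟨h hω' hω hX, hω'⟩

theorem Determines.law_lt_law (h : Determines P X Y) (hP : ∀ ω, 0 ≤ P ω) {ω ω' : Ω} (hω : P ω ≠ 0)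
    (hω' : P ω' ≠ 0) (hY : Y ω = Y ω') (hX : X ω ≠ X ω') : law P X (X ω) < law P Y (Y ω) := by
  classical
  rw [law_eq_sum_support, law_eq_sum_support]
  refine sum_lt_sum_of_subset (i := ω') (fun ω'' => ?_) (by simp [hY, hω']) (by simp [hX.symm])
    ((hP ω').lt_of_ne' hω') fun ω'' _ _ => hP ω''
  simp only [mem_filter_univ]
  exact fun ⟨hX, hω''⟩ => ⟨h hω'' hω hX, hω''⟩

theorem Determines.mul_logb_law_le (h : Determines P X Y) (hP : ∀ ω, 0 ≤ P ω) (ω : Ω) :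
    P ω * Real.logb 2 (law P X (X ω)) ≤ P ω * Real.logb 2 (law P Y (Y ω)) := by
  obtain hω | hω := eq_or_ne (P ω) 0
  · simp [hω]
  · exact mul_le_mul_of_nonneg_left
      (Real.logb_le_logb_of_le one_lt_two (law_pos hP hω) (h.law_le_law hP hω)) (hP ω)

theorem Determines.entH_le (h : Determines P X Y) (hP : ∀ ω, 0 ≤ P ω) : entH P Y ≤ entH P X := by
  rw [entH_eq_neg_sum, entH_eq_neg_sum, neg_le_neg_iff]
  exact sum_le_sum fun ω _ => h.mul_logb_law_le hP ω

theorem Determines.symm_of_entH_eq (h : Determines P X Y) (hP : ∀ ω, 0 ≤ P ω)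
    (hXY : entH P X = entH P Y) : Determines P Y X := by
  intro ω ω' hω hω' hY
  by_contra hX
  rw [entH_eq_neg_sum, entH_eq_neg_sum, neg_inj,
    sum_eq_sum_iff_of_le fun ω _ => h.mul_logb_law_le hP ω] at hXY
  have logb_eq := mul_left_cancel₀ hω (hXY ω (mem_univ ω))
  have logb_lt := Real.logb_lt_logb one_lt_two (law_pos hP hω) (h.law_lt_law hP hω hω' hY hX)
  exact logb_lt.ne logb_eq

theorem determines_of_condH_eq_zero (hP : ∀ ω, 0 ≤ P ω) (h : condH P X Y = 0) :
    Determines P Y X :=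
  have hY : Determines P (fun ω => (X ω, Y ω)) Y := .comp_self Prod.snd
  (hY.symm_of_entH_eq hP (sub_eq_zero.1 h)).trans (.comp_self Prod.fst)

theorem sum_mul_logb_nonpos {ι : Type*} {s : Finset ι} {p f : ι → ℝ} {b : ℝ} (hb : 1 ≤ b)
    (hp : ∀ i ∈ s, 0 ≤ p i) (hf : ∀ i ∈ s, p i ≠ 0 → 0 < f i)
    (hpf : ∑ i ∈ s, p i * f i ≤ ∑ i ∈ s, p i) : ∑ i ∈ s, p i * Real.logb b (f i) ≤ 0 := by
  have log_le (i) (hi : i ∈ s) : p i * Real.log (f i) ≤ p i * f i - p i := by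
    obtain h0 | h0 := eq_or_ne (p i) 0
    · simp [h0]
    · rw [← mul_sub_one]
      exact mul_le_mul_of_nonneg_left (Real.log_le_sub_one_of_pos (hf i hi h0)) (hp i hi)
  have sum_log_nonpos : ∑ i ∈ s, p i * Real.log (f i) ≤ 0 :=
    (sum_le_sum log_le).trans (by rwa [sum_sub_distrib, sub_nonpos])
  simp only [Real.logb, mul_div_assoc', ← sum_div]
  exact div_nonpos_of_nonpos_of_nonneg sum_log_nonpos (Real.log_nonneg hb)

theorem sum_mul_law_mul_law_div_le (hP : ∀ ω, 0 ≤ P ω) :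
    ∑ ω, P ω * (law P X (X ω) * law P Y (Y ω) / law P (fun ω => (X ω, Y ω)) (X ω, Y ω)) ≤
      (∑ ω, P ω) ^ 2 := by
  classical
  calc
    _ = ∑ z ∈ univ.image fun ω => (X ω, Y ω), law P (fun ω => (X ω, Y ω)) z *
          (law P X z.1 * law P Y z.2 / law P (fun ω => (X ω, Y ω)) z) :=
        (sum_law_mul fun z => law P X z.1 * law P Y z.2 / law P (fun ω => (X ω, Y ω)) z).symm
    _ ≤ ∑ z ∈ univ.image fun ω => (X ω, Y ω), law P X z.1 * law P Y z.2 :=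
        sum_le_sum fun z _ => by
          rw [mul_div_left_comm]
          exact mul_le_of_le_one_right (mul_nonneg (law_nonneg hP _) (law_nonneg hP _))
            (div_self_le_one _)
    _ ≤ ∑ z ∈ univ.image X ×ˢ univ.image Y, law P X z.1 * law P Y z.2 :=
        sum_le_sum_of_subset_of_nonneg (image_subset_iff.2 fun ω _ => by simp)
          fun z _ _ => mul_nonneg (law_nonneg hP _) (law_nonneg hP _)
    _ = (∑ ω, P ω) ^ 2 := by rw [sum_product, ← sum_mul_sum, sum_law, sum_law, sq]

theorem entH_prodMk_le_add (hP : ∀ ω, 0 ≤ P ω) (hP_sum : ∑ ω, P ω ≤ 1) :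
    entH P (fun ω => (X ω, Y ω)) ≤ entH P X + entH P Y := by
  set XY : Ω → S × T := fun ω => (X ω, Y ω)
  have sum_logb_nonpos :
      ∑ ω, P ω * Real.logb 2 (law P X (X ω) * law P Y (Y ω) / law P XY (XY ω)) ≤ 0 := by
    refine sum_mul_logb_nonpos one_le_two (fun ω _ => hP ω) (fun ω _ hω => ?_) ?_
    · exact div_pos (mul_pos (law_pos hP hω) (law_pos hP hω)) (law_pos hP hω)
    · exact (sum_mul_law_mul_law_div_le hP).trans
        (pow_le_of_le_one (sum_nonneg fun ω _ => hP ω) hP_sum two_ne_zero)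
  have logb_eq (ω : Ω) : P ω * Real.logb 2 (law P X (X ω) * law P Y (Y ω) / law P XY (XY ω)) =
      P ω * Real.logb 2 (law P X (X ω)) + P ω * Real.logb 2 (law P Y (Y ω)) -
        P ω * Real.logb 2 (law P XY (XY ω)) := by
    obtain hω | hω := eq_or_ne (P ω) 0
    · simp [hω]
    · have hX := (law_pos (X := X) hP hω).ne'
      have hY := (law_pos (X := Y) hP hω).ne'
      rw [Real.logb_div (mul_ne_zero hX hY) (law_pos hP hω).ne', Real.logb_mul hX hY]
      ring
  simp only [logb_eq, sum_sub_distrib, sum_add_distrib] at sum_logb_nonpos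
  simp only [entH_eq_neg_sum]
  linarith

theorem Determines.entH_le_add (h : Determines P (fun ω => (X ω, Y ω)) Z) (hP : ∀ ω, 0 ≤ P ω)
    (hP_sum : ∑ ω, P ω ≤ 1) : entH P Z ≤ entH P X + entH P Y :=
  (h.entH_le hP).trans (entH_prodMk_le_add hP hP_sum)

theorem entH_pi_le_sum {ι : Type*} {σ : ι → Type*} (F : ∀ i, Ω → σ i) (s : Finset ι)
    (hP : ∀ ω, 0 ≤ P ω) (hP_sum : ∑ ω, P ω = 1) :
    entH P (fun ω (i : s) => F i ω) ≤ ∑ i ∈ s, entH P (F i) := by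
  classical
  induction s using Finset.induction_on with
  | empty => exact (entH_eq_zero_of_subsingleton hP_sum).le
  | insert a s ha ih =>
    have hdet : Determines P (fun ω => (F a ω, fun i : s => F i ω))
        (fun ω (i : ↥(insert a s)) => F i ω) :=
      determines_insert (.comp_self Prod.fst) (.comp_self Prod.snd)
    rw [sum_insert ha]
    exact (hdet.entH_le_add hP hP_sum.le).trans (by gcongr)

end Entropy

namespace IsRegenCode

variable {Ω : Type*} [Fintype Ω] {n k d : ℕ} {B α β : ℝ} {P : Ω → ℝ}
  {σM : Type*} {σW : Fin n → Type*} {σS : Fin n → Fin n → Type*}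
  {M : Ω → σM} {W : ∀ j, Ω → σW j} {S : ∀ i j, Ω → σS i j}

theorem entH_jointW_le (hcode : IsRegenCode n k d B α β P M W S) (J : Finset (Fin n)) :
    entH P (jointW W J) ≤ #J * α :=
  (entH_pi_le_sum W J hcode.prob_nonneg hcode.prob_sum).trans_eq (by simp [hcode.hWα])

theorem entH_jointSto_le (hcode : IsRegenCode n k d B α β P M W S) {j : Fin n}
    {I : Finset (Fin n)} (hj : j ∉ I) : entH P (jointSto S I j) ≤ #I * β := by
  refine (entH_pi_le_sum (S · j) I hcode.prob_nonneg hcode.prob_sum).trans_eq ?_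
  rw [sum_congr rfl fun i hi => hcode.hSβ i j (ne_of_mem_of_not_mem hi hj), sum_const,
    nsmul_eq_mul]

theorem le_entH_jointW (hcode : IsRegenCode n k d B α β P M W S) {J : Finset (Fin n)}
    (hJ : k ≤ #J) : B ≤ entH P (jointW W J) :=
  hcode.hMB ▸ (determines_of_condH_eq_zero hcode.prob_nonneg (hcode.hMW J hJ)).entH_le
    hcode.prob_nonneg

theorem determines_jointW_insert (hcode : IsRegenCode n k d B α β P M W S) {j : Fin n}
    {J I : Finset (Fin n)} (hjJ : j ∉ J) (hjI : j ∉ I) (hd : d ≤ #(J ∪ I)) :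
    Determines P (fun ω => (jointW W J ω, jointSto S I j ω)) (jointW W (insert j J)) := by
  have hP := hcode.prob_nonneg
  have helpers : Determines P (fun ω => (jointW W J ω, jointSto S I j ω))
      (jointSto S (J ∪ I) j) := by
    refine .pi fun ⟨i, hi⟩ => ?_
    obtain hiJ | hiI := mem_union.1 hi
    · have stored : Determines P (fun ω => (jointW W J ω, jointSto S I j ω)) (jointW W J) :=
        .comp_self Prod.fst
      exact (stored.apply (F := fun l : J => W l) ⟨i, hiJ⟩).trans (determines_of_condH_eq_zero hP
        (hcode.hSW i j (ne_of_mem_of_not_mem hiJ hjJ)))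
    · have received : Determines P (fun ω => (jointW W J ω, jointSto S I j ω)) (jointSto S I j) :=
        .comp_self Prod.snd
      exact received.apply (F := fun l : I => S l j) ⟨i, hiI⟩
  have repair : Determines P (jointSto S (J ∪ I) j) (W j) :=
    determines_of_condH_eq_zero hP (hcode.hWS j (J ∪ I) hd (by simp [hjJ, hjI]))
  exact determines_insert (helpers.trans repair) (.comp_self Prod.fst)

/-- If `d ≤ #J` then no further helpers are needed, in agreement with the truncated subtraction. -/
theorem entH_jointW_insert_le (hcode : IsRegenCode n k d B α β P M W S) {j : Fin n}
    {J : Finset (Fin n)} (hj : j ∉ J) :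
    entH P (jointW W (insert j J)) ≤ entH P (jointW W J) + (d - #J : ℕ) * β := by
  have enough_servers : d - #J ≤ #(insert j J)ᶜ := by
    rw [card_compl, Fintype.card_fin, card_insert_of_notMem hj]
    have := hcode.hdn
    omega
  obtain ⟨I, hI, hIcard⟩ := exists_subset_card_eq enough_servers
  have hjI : j ∉ I := fun h => by simpa using hI h
  have hdisj : Disjoint J I := disjoint_left.2 fun i hiJ hiI => by simpa [hiJ] using hI hiI
  have hd : d ≤ #(J ∪ I) := by rw [card_union_of_disjoint hdisj]; omega
  calc
    entH P (jointW W (insert j J)) ≤ entH P (jointW W J) + entH P (jointSto S I j) :=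
      (hcode.determines_jointW_insert hj hjI hd).entH_le_add hcode.prob_nonneg hcode.prob_sum.le
    _ ≤ entH P (jointW W J) + (d - #J : ℕ) * β := by
      rw [← hIcard]
      gcongr
      exact hcode.entH_jointSto_le hjI

theorem entH_jointW_union_le (hcode : IsRegenCode n k d B α β P M W S) {J K : Finset (Fin n)}
    (hJK : Disjoint J K) :
    entH P (jointW W (J ∪ K)) ≤
      entH P (jointW W J) + ∑ i ∈ range #K, ((d - (#J + i) : ℕ) : ℝ) * β := by
  induction K using Finset.induction_on with
  | empty => rw [union_empty, card_empty, sum_range_zero, add_zero]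
  | insert j K hj ih =>
    obtain ⟨hjJ, hJK⟩ := disjoint_insert_right.1 hJK
    have hrepair := hcode.entH_jointW_insert_le (J := J ∪ K) (j := j) (by simp [hjJ, hj])
    rw [card_union_of_disjoint hJK] at hrepair
    rw [union_insert, card_insert_of_notMem hj, sum_range_succ]
    linarith [ih hJK]

end IsRegenCode

theorem Bfun_eq_add_sum {k d q : ℕ} (hq : q ≤ k) (hkd : k ≤ d + 1) (α β : ℝ) :
    Bfun k d q α β = q * α + ∑ i ∈ range (k - q), ((d - (q + i) : ℕ) : ℝ) * β := by
  have sum_reflect : ∑ i ∈ range (k - q), (d - (q + i)) =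
      ∑ i ∈ range (k - q), ((d + 1 - k) + i) := by
    rw [← sum_range_reflect]
    refine sum_congr rfl fun i hi => ?_
    have := mem_range.1 hi
    omega
  have triangular : ((∑ i ∈ range (k - q), i : ℕ) : ℝ) * 2 = ((k - q) * (k - q - 1) : ℕ) :=
    mod_cast sum_range_id_mul_two (k - q)
  rw [← sum_mul, ← Nat.cast_sum, sum_reflect, sum_add_distrib, sum_const, card_range, smul_eq_mul,
    Bfun, ← triangular]
  push_cast
  ring

/-- `B ≤ B_q` for every `0 ≤ q ≤ k`. -/
theorem stmt_0 {Ω : Type*} [Fintype Ω] {n k d : ℕ} {B α β : ℝ} {P : Ω → ℝ}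
    {σM : Type*} {σW : Fin n → Type*} {σS : Fin n → Fin n → Type*}
    {M : Ω → σM} {W : ∀ j, Ω → σW j} {S : ∀ i j, Ω → σS i j}
    (hcode : IsRegenCode n k d B α β P M W S)
    (q : ℕ) (hq : q ≤ k) :
    B ≤ Bfun k d q α β := by
  obtain ⟨T, hT⟩ : ∃ T : Finset (Fin n), #T = k := by
    have hkn : k ≤ #(univ : Finset (Fin n)) := by
      rw [card_fin]
      exact hcode.hkd.trans (Nat.le_of_succ_le hcode.hdn)
    simpa using exists_subset_card_eq hkn
  obtain ⟨J, hJT, rfl⟩ := exists_subset_card_eq (hq.trans_eq hT.symm)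
  calc
    B ≤ entH P (jointW W T) := hcode.le_entH_jointW hT.ge
    _ = entH P (jointW W (J ∪ T \ J)) := by rw [union_sdiff_of_subset hJT]
    _ ≤ entH P (jointW W J) + ∑ i ∈ range #(T \ J), ((d - (#J + i) : ℕ) : ℝ) * β :=
      hcode.entH_jointW_union_le disjoint_sdiff
    _ ≤ #J * α + ∑ i ∈ range (k - #J), ((d - (#J + i) : ℕ) : ℝ) * β := by
      rw [card_sdiff_of_subset hJT, hT]
      gcongr
      exact hcode.entH_jointW_le J
    _ = Bfun k d #J α β := (Bfun_eq_add_sum hq (Nat.le_succ_of_le hcode.hkd) α β).symm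
end

section
/- (First outer bound.) Let (M, (W_j), (S_i^j)) be an exact-repair regenerating code with parameters (n,k,d) and secondary parameters (B,α,β), where n ≥ d+1. Let q, ℓ, m be positive integers with q + ℓ + m ≤ k, let N ≥ 3 be an integer, and let V_1, V_2, …, V_{N−2} be subsets of {ℓ+m+1, …, d+1} of sizes q_i = |V_i| with 1 ≤ q_i ≤ k−ℓ−m and with empty intersection V_1 ∩ V_2 ∩ ⋯ ∩ V_{N−2} = ∅. Then N·B ≤ B_q + Σ_{i=1}^{N−2} B_{q_i} + B_{ℓ+m} − ℓmβ. -/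
open Finset

/-!
Split `d + 1` servers into `L`, `K` and the rest `O`, and put `C = L ∪ K`. All bounds come from
submodularity of entropy, each step recovering the file once more.

* Repairing `L` with the help of `K`, and `K` with the help of `L`, bounds `B + H(W_C, S_O^C)`.
* Exchanging `W_C` for `W_Q`, where `Q ⊆ O` is a set of `q` servers, bounds `B + H(S_Q^C)` by
  `H(W_C, S_O^C) + B_q` minus a multiple of `β`.
* Replacing `Q` by `Q ∩ V_1`, then by `Q ∩ V_1 ∩ V_2`, and so on, each step costs one `B_{q_i}` and
  recovers the file once, until the intersection is empty and no entropy `H(S_∅^C)` is left.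

The numbers of messages used cancel, except that repairing `L` and `K` separately saves one message
for each of the `ℓm` pairs in `L × K`.
-/

section Entropy

variable {Ω S T U : Type*} [Fintype Ω] {P : Ω → ℝ}

open Classical in
/-- The probability of the event `X = X ω`. Attaching it to outcomes `ω` rather than to values of
`X` turns entropies of different variables into sums over the same index set `Ω`. -/
noncomputable def levelMass (P : Ω → ℝ) (X : Ω → S) (ω : Ω) : ℝ :=
  ∑ ω' with X ω' = X ω, P ω'

lemma entH_eq_sum_neg_logb_levelMass (P : Ω → ℝ) (X : Ω → S) :
    entH P X = ∑ ω, P ω * -Real.logb 2 (levelMass P X ω) := by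
  classical
  unfold entH
  rw [← sum_fiberwise_of_maps_to (t := univ.image X) (g := X)
    fun ω _ ↦ mem_image_of_mem X (mem_univ ω)]
  refine sum_congr (by congr) fun s _ ↦ ?_
  rw [← mul_neg, sum_mul]
  refine sum_congr (by congr) fun ω hω ↦ ?_
  rw [levelMass, (mem_filter.1 hω).2]

lemma levelMass_congr {X : Ω → S} {ω ω' : Ω} (h : X ω = X ω') :
    levelMass P X ω = levelMass P X ω' := by
  rw [levelMass, h, levelMass]

lemma levelMass_nonneg (hP : ∀ ω, 0 ≤ P ω) (X : Ω → S) (ω : Ω) : 0 ≤ levelMass P X ω :=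
  sum_nonneg fun ω _ ↦ hP ω

lemma levelMass_pos (hP : ∀ ω, 0 ≤ P ω) (X : Ω → S) {ω : Ω} (hω : 0 < P ω) :
    0 < levelMass P X ω := by
  classical
  exact hω.trans_le (single_le_sum (f := P) (fun i _ ↦ hP i) (by simp))

lemma levelMass_anti (hP : ∀ ω, 0 ≤ P ω) {X : Ω → S} {Y : Ω → T} (h : X.FactorsThrough Y)
    (ω : Ω) : levelMass P Y ω ≤ levelMass P X ω := by
  classical
  exact sum_le_sum_of_subset_of_nonneg (monotone_filter_right _ fun _ _ hω' ↦ h hω')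
    fun i _ _ ↦ hP i

lemma entH_mono (hP : ∀ ω, 0 ≤ P ω) {X : Ω → S} {Y : Ω → T} (h : X.FactorsThrough Y) :
    entH P X ≤ entH P Y := by
  simp only [entH_eq_sum_neg_logb_levelMass]
  refine sum_le_sum fun ω _ ↦ ?_
  rcases (hP ω).eq_or_lt with h₀ | hpos
  · simp [← h₀]
  · have := levelMass_pos hP Y hpos
    have := levelMass_anti hP h ω
    gcongr
    norm_num

lemma entH_eq_zero_of_const (hP₁ : ∑ ω, P ω = 1) {X : Ω → S} (h : ∀ ω ω', X ω = X ω') :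
    entH P X = 0 := by
  classical
  rw [entH_eq_sum_neg_logb_levelMass]
  refine sum_eq_zero fun ω _ ↦ ?_
  have : levelMass P X ω = 1 := by rw [levelMass, filter_true_of_mem fun x _ ↦ h x ω, hP₁]
  simp [this]

open Classical in
lemma sum_fiber_div_levelMass_le_one (P : Ω → ℝ) (X : Ω → S) (s : S) :
    ∑ ω with X ω = s, P ω / levelMass P X ω ≤ 1 := by
  calc ∑ ω with X ω = s, P ω / levelMass P X ω
      = ∑ ω with X ω = s, P ω / ∑ ω' with X ω' = s, P ω' :=
        sum_congr rfl fun ω hω ↦ by rw [levelMass, (mem_filter.1 hω).2]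
    _ = (∑ ω with X ω = s, P ω) / ∑ ω' with X ω' = s, P ω' := (sum_div ..).symm
    _ ≤ 1 := div_self_le_one _

open Classical in
lemma levelMass_mul_levelMass (P : Ω → ℝ) (X : Ω → S) (Y : Ω → T) (ω : Ω) :
    levelMass P X ω * levelMass P Y ω =
      ∑ p : Ω × Ω with X p.1 = X ω ∧ Y p.2 = Y ω, P p.1 * P p.2 := by
  rw [levelMass, levelMass, sum_mul_sum, ← sum_product', ← filter_product, univ_product_univ]

open Classical in
lemma sum_pairs_div_levelMass_le (hP : ∀ ω, 0 ≤ P ω) (Z : Ω → U) :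
    ∑ p : Ω × Ω with Z p.2 = Z p.1, P p.1 * P p.2 / levelMass P Z p.1 ≤ ∑ ω, P ω := by
  calc ∑ p : Ω × Ω with Z p.2 = Z p.1, P p.1 * P p.2 / levelMass P Z p.1
      = ∑ ω₁, P ω₁ * (levelMass P Z ω₁ / levelMass P Z ω₁) := by
        rw [sum_filter, Fintype.sum_prod_type]
        refine sum_congr rfl fun ω₁ _ ↦ ?_
        dsimp only
        rw [← sum_filter, ← sum_div, ← mul_sum, mul_div_assoc, levelMass]
    _ ≤ ∑ ω, P ω := sum_le_sum fun ω _ ↦ mul_le_of_le_one_right (hP ω) (div_self_le_one _)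

/- `P(X) P(Y) / P(Z)` is the law that makes `X` and `Y` conditionally independent given `Z`;
restricted to the support of `(X, Y)` it has mass at most one. The law is realised on pairs of
outcomes `(ω₁, ω₂)` with `Z ω₁ = Z ω₂`, where `X` is read off `ω₁` and `Y` off `ω₂`. -/
lemma sum_mul_levelMass_ratio_le (hP : ∀ ω, 0 ≤ P ω) {X : Ω → S} {Y : Ω → T} {Z : Ω → U}
    (hZX : Z.FactorsThrough X) (hZY : Z.FactorsThrough Y) :
    ∑ ω, P ω * (levelMass P X ω * levelMass P Y ω /
      (levelMass P (fun ω ↦ (X ω, Y ω)) ω * levelMass P Z ω)) ≤ ∑ ω, P ω := by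
  classical
  set c := levelMass P fun ω ↦ (X ω, Y ω)
  set e := levelMass P Z
  have weight_nonneg (p : Ω × Ω) : 0 ≤ P p.1 * P p.2 / e p.1 :=
    div_nonneg (mul_nonneg (hP _) (hP _)) (levelMass_nonneg hP Z _)
  have fiber_le_one (p : Ω × Ω) : ∑ ω with X p.1 = X ω ∧ Y p.2 = Y ω, P ω / c ω ≤ 1 := by
    simpa only [Prod.mk.injEq, eq_comm] using
      sum_fiber_div_levelMass_le_one P (fun ω ↦ (X ω, Y ω)) (X p.1, Y p.2)
  calc ∑ ω, P ω * (levelMass P X ω * levelMass P Y ω / (c ω * e ω))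
      = ∑ ω, ∑ p : Ω × Ω with X p.1 = X ω ∧ Y p.2 = Y ω,
          P p.1 * P p.2 / e p.1 * (P ω / c ω) := by
        refine sum_congr rfl fun ω _ ↦ ?_
        rw [levelMass_mul_levelMass, sum_div, mul_sum]
        refine sum_congr rfl fun p hp ↦ ?_
        have he : e p.1 = e ω := levelMass_congr (hZX (mem_filter.1 hp).2.1)
        rw [he]
        ring
    _ = ∑ p : Ω × Ω, P p.1 * P p.2 / e p.1 *
          ∑ ω with X p.1 = X ω ∧ Y p.2 = Y ω, P ω / c ω := by
        simp only [mul_sum]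
        exact sum_comm' (by simp)
    _ = ∑ p : Ω × Ω with Z p.2 = Z p.1, P p.1 * P p.2 / e p.1 *
          ∑ ω with X p.1 = X ω ∧ Y p.2 = Y ω, P ω / c ω := by
        refine (sum_filter_of_ne fun p _ hp ↦ ?_).symm
        obtain ⟨ω, hω, -⟩ := exists_ne_zero_of_sum_ne_zero (right_ne_zero_of_mul hp)
        obtain ⟨hX, hY⟩ := (mem_filter.1 hω).2
        exact (hZY hY).trans (hZX hX).symm
    _ ≤ ∑ p : Ω × Ω with Z p.2 = Z p.1, P p.1 * P p.2 / e p.1 :=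
        sum_le_sum fun p _ ↦ mul_le_of_le_one_right (weight_nonneg p) (fiber_le_one p)
    _ ≤ ∑ ω, P ω := sum_pairs_div_levelMass_le hP Z

lemma mul_log_ratio_le {w a b c e : ℝ} (hw : 0 ≤ w)
    (hpos : 0 < w → 0 < a ∧ 0 < b ∧ 0 < c ∧ 0 < e) :
    w * (Real.log a + Real.log b - Real.log c - Real.log e) ≤ w * (a * b / (c * e)) - w := by
  rcases hw.eq_or_lt with rfl | hw
  · simp
  · obtain ⟨ha, hb, hc, he⟩ := hpos hw
    have hlog := Real.log_le_sub_one_of_pos (div_pos (mul_pos ha hb) (mul_pos hc he))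
    rw [Real.log_div (mul_pos ha hb).ne' (mul_pos hc he).ne', Real.log_mul ha.ne' hb.ne',
      Real.log_mul hc.ne' he.ne'] at hlog
    linear_combination w * hlog

lemma entH_prod_add_le (hP : ∀ ω, 0 ≤ P ω) {X : Ω → S} {Y : Ω → T} {Z : Ω → U}
    (hZX : Z.FactorsThrough X) (hZY : Z.FactorsThrough Y) :
    entH P (fun ω ↦ (X ω, Y ω)) + entH P Z ≤ entH P X + entH P Y := by
  set a := levelMass P X with ha
  set b := levelMass P Y with hb
  set c := levelMass P (fun ω ↦ (X ω, Y ω)) with hc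
  set e := levelMass P Z with he
  have hlog : ∑ ω, P ω * (Real.log (a ω) + Real.log (b ω) - Real.log (c ω) - Real.log (e ω))
      ≤ 0 := by
    have hterm := sum_le_sum fun ω (_ : ω ∈ univ) ↦ mul_log_ratio_le (hP ω) fun hω ↦
      ⟨levelMass_pos hP X hω, levelMass_pos hP Y hω,
        levelMass_pos hP (fun ω ↦ (X ω, Y ω)) hω, levelMass_pos hP Z hω⟩
    rw [sum_sub_distrib] at hterm
    linarith [sum_mul_levelMass_ratio_le hP hZX hZY]
  have hdiff : entH P (fun ω ↦ (X ω, Y ω)) + entH P Z - (entH P X + entH P Y) =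
      (∑ ω, P ω * (Real.log (a ω) + Real.log (b ω) - Real.log (c ω) - Real.log (e ω)))
        / Real.log 2 := by
    simp only [entH_eq_sum_neg_logb_levelMass, ← sum_add_distrib, ← sum_sub_distrib, sum_div,
      Real.logb, ← ha, ← hb, ← hc, ← he]
    exact sum_congr rfl fun ω _ ↦ by ring
  rw [← sub_nonpos, hdiff]
  exact div_nonpos_of_nonpos_of_nonneg hlog (Real.log_nonneg one_le_two)

end Entropy

/-- The abstract properties of `F J E = H(W_J, S_E)` on which the cut-set arguments for regenerating
codes rest; `ι` is the set of servers, and a message `S_i^j` is encoded by the pair `(i, j)`. Pairs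
`(i, i)` are allowed in `E` but stand for no message. -/
structure IsCodeEntropy {ι : Type*} [DecidableEq ι] (k d : ℕ) (B α β : ℝ)
    (F : Finset ι → Finset (ι × ι) → ℝ) : Prop where
  k_le_d : k ≤ d
  message_nonneg : 0 ≤ β
  mono : ∀ {J J' E E'}, J ⊆ J' → E ⊆ E' → F J E ≤ F J' E'
  submodular : ∀ J J' E E', F (J ∪ J') (E ∪ E') + F (J ∩ J') (E ∩ E') ≤ F J E + F J' E'
  empty : F ∅ ∅ = 0
  server_le : ∀ j, F {j} ∅ ≤ α
  message_le : ∀ e, F ∅ {e} ≤ β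
  send_le : ∀ i j, F {i} {(i, j)} ≤ F {i} ∅
  repair_le : ∀ (j : ι) (I : Finset ι), d ≤ #I → j ∉ I → F {j} (I ×ˢ {j}) ≤ F ∅ (I ×ˢ {j})
  le_recover : ∀ J : Finset ι, k ≤ #J → B ≤ F J ∅

section CodeEntropyOfCode

variable {Ω : Type*} {n : ℕ} {σW : Fin n → Type*} {σS : Fin n → Fin n → Type*}

lemma jointW_eq_jointW_iff {W : ∀ j, Ω → σW j} {J : Finset (Fin n)} {ω ω' : Ω} :
    jointW W J ω = jointW W J ω' ↔ ∀ j ∈ J, W j ω = W j ω' := by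
  simp [jointW, funext_iff]

lemma jointS_eq_jointS_iff {S : ∀ i j, Ω → σS i j} {E : Finset (Fin n × Fin n)} {ω ω' : Ω} :
    jointS S E ω = jointS S E ω' ↔ ∀ i j, (i, j) ∈ E → S i j ω = S i j ω' := by
  simp [jointS, funext_iff]

lemma jointSto_eq_jointSto_iff {S : ∀ i j, Ω → σS i j} {I : Finset (Fin n)} {j : Fin n}
    {ω ω' : Ω} : jointSto S I j ω = jointSto S I j ω' ↔ ∀ i ∈ I, S i j ω = S i j ω' := by
  simp [jointSto, funext_iff]

/-- The joint random variable `(W_J, S_E)`. As in the paper's `S_I^J`, the pairs `(i, i)` in `E` are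
dropped, because a code puts no constraint on `S i i`. -/
def jointWS (W : ∀ j, Ω → σW j) (S : ∀ i j, Ω → σS i j) (J : Finset (Fin n))
    (E : Finset (Fin n × Fin n)) :
    Ω → (∀ j : J, σW j) × ∀ e : ({e ∈ E | e.1 ≠ e.2} : Finset _), σS e.1.1 e.1.2 :=
  fun ω ↦ (jointW W J ω, jointS S {e ∈ E | e.1 ≠ e.2} ω)

lemma jointWS_eq_jointWS_iff {W : ∀ j, Ω → σW j} {S : ∀ i j, Ω → σS i j} {J : Finset (Fin n)}
    {E : Finset (Fin n × Fin n)} {ω ω' : Ω} :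
    jointWS W S J E ω = jointWS W S J E ω' ↔ (∀ j ∈ J, W j ω = W j ω') ∧
      ∀ i j, (i, j) ∈ E → i ≠ j → S i j ω = S i j ω' := by
  simp [jointWS, jointW_eq_jointW_iff, jointS_eq_jointS_iff]

lemma jointWS_factorsThrough_of_subset {W : ∀ j, Ω → σW j} {S : ∀ i j, Ω → σS i j}
    {J J' : Finset (Fin n)} {E E' : Finset (Fin n × Fin n)} (hJ : J ⊆ J') (hE : E ⊆ E') :
    (jointWS W S J E).FactorsThrough (jointWS W S J' E') := fun ω ω' h ↦ by
  rw [jointWS_eq_jointWS_iff] at h ⊢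
  exact ⟨fun j hj ↦ h.1 j (hJ hj), fun i j hij ↦ h.2 i j (hE hij)⟩

lemma entH_le_entH_of_condH_eq_zero [Fintype Ω] {S T U V : Type*} {P : Ω → ℝ}
    (hP : ∀ ω, 0 ≤ P ω) {X : Ω → S} {Y : Ω → T} {X' : Ω → U} {Y' : Ω → V}
    (h : condH P X Y = 0) (hX : X'.FactorsThrough fun ω ↦ (X ω, Y ω))
    (hY : Y.FactorsThrough Y') : entH P X' ≤ entH P Y' :=
  (entH_mono hP hX).trans ((sub_eq_zero.1 h).le.trans (entH_mono hP hY))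

lemma IsRegenCode.isCodeEntropy [Fintype Ω] {k d : ℕ} {B α β : ℝ} {P : Ω → ℝ}
    {σM : Type*} {M : Ω → σM} {W : ∀ j, Ω → σW j} {S : ∀ i j, Ω → σS i j}
    (hcode : IsRegenCode n k d B α β P M W S) :
    IsCodeEntropy k d B α β fun J E ↦ entH P (jointWS W S J E) where
  k_le_d := hcode.hkd
  message_nonneg := hcode.hβ
  mono hJ hE := entH_mono hcode.prob_nonneg (jointWS_factorsThrough_of_subset hJ hE)
  submodular J J' E E' := by
    have hunion : (jointWS W S (J ∪ J') (E ∪ E')).FactorsThrough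
        fun ω ↦ (jointWS W S J E ω, jointWS W S J' E' ω) := fun ω ω' h ↦ by
      simp only [Prod.mk.injEq, jointWS_eq_jointWS_iff, mem_union] at h ⊢
      grind
    exact (add_le_add_left (entH_mono hcode.prob_nonneg hunion) _).trans
      (entH_prod_add_le hcode.prob_nonneg
        (jointWS_factorsThrough_of_subset inter_subset_left inter_subset_left)
        (jointWS_factorsThrough_of_subset inter_subset_right inter_subset_right))
  empty := entH_eq_zero_of_const hcode.prob_sum fun ω ω' ↦ by simp [jointWS_eq_jointWS_iff]
  server_le j := by
    rw [← hcode.hWα j]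
    exact entH_mono hcode.prob_nonneg fun ω ω' h ↦ by simpa [jointWS_eq_jointWS_iff] using h
  message_le e := by
    obtain ⟨i, j⟩ := e
    rcases eq_or_ne i j with rfl | hij
    · refine (entH_eq_zero_of_const hcode.prob_sum fun ω ω' ↦ ?_).trans_le hcode.hβ
      simp [jointWS_eq_jointWS_iff]
    · rw [← hcode.hSβ i j hij]
      refine entH_mono hcode.prob_nonneg fun ω ω' h ↦ ?_
      simp only [jointWS_eq_jointWS_iff, mem_singleton]
      grind
  send_le i j := by
    rcases eq_or_ne i j with rfl | hij
    · exact entH_mono hcode.prob_nonneg fun ω ω' h ↦ by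
        simpa [jointWS_eq_jointWS_iff] using h
    · refine entH_le_entH_of_condH_eq_zero hcode.prob_nonneg (hcode.hSW i j hij)
        (fun ω ω' h ↦ ?_) (fun ω ω' h ↦ ?_) <;>
      simp only [Prod.mk.injEq, jointWS_eq_jointWS_iff, mem_singleton] at h ⊢ <;> grind
  repair_le j I hI hj := by
    refine entH_le_entH_of_condH_eq_zero hcode.prob_nonneg (hcode.hWS j I hI hj)
      (fun ω ω' h ↦ ?_) (fun ω ω' h ↦ ?_) <;>
    simp only [Prod.mk.injEq, jointWS_eq_jointWS_iff, jointSto_eq_jointSto_iff, mem_singleton,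
      mem_product] at h ⊢ <;> grind
  le_recover J hJ := by
    rw [← hcode.hMB]
    exact entH_le_entH_of_condH_eq_zero hcode.prob_nonneg (hcode.hMW J hJ)
      (fun ω ω' h ↦ congr_arg Prod.fst h) (fun ω ω' h ↦ congr_arg Prod.fst h)

end CodeEntropyOfCode

/-- The messages into `R` from servers in `Y` and from later servers of `R`: those needed to repair
the servers of `R` in increasing order when the remaining helpers are already known. -/
def repairEdges {ι : Type*} [LinearOrder ι] (Y R : Finset ι) : Finset (ι × ι) :=
  Y ×ˢ R ∪ {e ∈ R ×ˢ R | e.2 < e.1}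

section RepairEdges

variable {ι : Type*} [LinearOrder ι] {Y R : Finset ι}

lemma mem_repairEdges {e : ι × ι} :
    e ∈ repairEdges Y R ↔ e.2 ∈ R ∧ (e.1 ∈ Y ∨ e.1 ∈ R ∧ e.2 < e.1) := by
  simp only [repairEdges, mem_union, mem_product, mem_filter]
  tauto

lemma repairEdges_insert_of_forall_lt {a : ι} (ha : ∀ x ∈ R, x < a) :
    repairEdges Y (insert a R) = repairEdges (insert a Y) R ∪ Y ×ˢ {a} := by
  ext e
  simp only [mem_repairEdges, mem_union, mem_product, mem_insert, mem_singleton]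
  grind

lemma card_repairEdges_le (Y R : Finset ι) : #(repairEdges Y R) ≤ #Y * #R + (#R).choose 2 := by
  induction R using Finset.induction_on_max generalizing Y with
  | empty => simp [repairEdges]
  | insert a R hlt ih =>
    have haR : a ∉ R := fun h ↦ lt_irrefl a (hlt a h)
    calc #(repairEdges Y (insert a R))
        ≤ #(repairEdges (insert a Y) R) + #(Y ×ˢ {a}) := by
          rw [repairEdges_insert_of_forall_lt hlt]
          exact card_union_le _ _
      _ ≤ ((#Y + 1) * #R + (#R).choose 2) + #Y := by
          grw [ih, card_insert_le, card_product, card_singleton, mul_one]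
      _ = #Y * #(insert a R) + (#(insert a R)).choose 2 := by
          rw [card_insert_of_notMem haR, Nat.choose_succ_succ', Nat.choose_one_right]
          ring

end RepairEdges

/-- The number of messages that, together with `x` servers, suffice to recover the file. -/
def recoveryCost (k d x : ℕ) : ℕ :=
  (d + 1 - k) * (k - x) + (k - x).choose 2

lemma cast_recoveryCost {k d x : ℕ} (hx : x ≤ k) (hkd : k ≤ d) :
    (recoveryCost k d x : ℝ) = (d + 1 - k) * (k - x) + (k - x) * (k - x - 1) / 2 := by
  rw [recoveryCost, Nat.cast_add, Nat.cast_mul, Nat.cast_choose_two, Nat.cast_sub hx,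
    Nat.cast_sub (by omega), Nat.cast_succ]

lemma Bfun_eq_add_recoveryCost (k d q : ℕ) (α β : ℝ) :
    Bfun k d q α β = q * α + recoveryCost k d q * β := by
  have hchoose : (k - q) * (k - q - 1) = 2 * (k - q).choose 2 := by
    rw [Nat.choose_two_right, Nat.mul_div_cancel' (Nat.even_mul_pred_self _).two_dvd]
  rw [Bfun, hchoose, recoveryCost]
  push_cast
  ring

/-- Repairing `c` further servers first costs a message from each of the `d + 1 - c - v` other
servers to each of the `c`, and one for each pair among the `c`. -/
lemma recoveryCost_eq_add {k d c v : ℕ} (hcv : c + v ≤ k) (hkd : k ≤ d) :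
    (recoveryCost k d v : ℝ) =
      recoveryCost k d (c + v) + (d + 1 - c - v) * c + (c.choose 2 : ℕ) := by
  rw [cast_recoveryCost hcv hkd, cast_recoveryCost (by omega) hkd, Nat.cast_choose_two,
    Nat.cast_add]
  ring

namespace IsCodeEntropy

section DecidableEq

variable {ι : Type*} [DecidableEq ι] {k d : ℕ} {B α β : ℝ} {F : Finset ι → Finset (ι × ι) → ℝ}

lemma nonneg (hF : IsCodeEntropy k d B α β F) (J : Finset ι) (E : Finset (ι × ι)) : 0 ≤ F J E :=
  hF.empty.ge.trans (hF.mono (empty_subset _) (empty_subset _))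

lemma add_le_add_of_subset (hF : IsCodeEntropy k d B α β F)
    {J J' J₁ J₂ : Finset ι} {E E' E₁ E₂ : Finset (ι × ι)} (hJ₁ : J₁ ⊆ J ∪ J') (hE₁ : E₁ ⊆ E ∪ E')
    (hJ₂ : J₂ ⊆ J ∩ J') (hE₂ : E₂ ⊆ E ∩ E') : F J₁ E₁ + F J₂ E₂ ≤ F J E + F J' E' :=
  (add_le_add (hF.mono hJ₁ hE₁) (hF.mono hJ₂ hE₂)).trans (hF.submodular J J' E E')

lemma subadditive (hF : IsCodeEntropy k d B α β F) (J J' : Finset ι) (E E' : Finset (ι × ι)) :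
    F (J ∪ J') (E ∪ E') ≤ F J E + F J' E' := by
  linarith [hF.submodular J J' E E', hF.nonneg (J ∩ J') (E ∩ E')]

lemma servers_le (hF : IsCodeEntropy k d B α β F) (J : Finset ι) : F J ∅ ≤ #J * α := by
  induction J using Finset.induction_on with
  | empty => simp [hF.empty]
  | insert a J ha ih =>
    have hunion := hF.subadditive {a} J ∅ ∅
    rw [← insert_eq, union_empty] at hunion
    rw [card_insert_of_notMem ha, Nat.cast_succ]
    linarith [hF.server_le a]

lemma messages_le (hF : IsCodeEntropy k d B α β F) (E : Finset (ι × ι)) : F ∅ E ≤ #E * β := by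
  induction E using Finset.induction_on with
  | empty => simp [hF.empty]
  | insert e E he ih =>
    have hunion := hF.subadditive ∅ ∅ {e} E
    rw [← insert_eq, union_empty] at hunion
    rw [card_insert_of_notMem he, Nat.cast_succ]
    linarith [hF.message_le e]

lemma le_add_of_card_le (hF : IsCodeEntropy k d B α β F) (J : Finset ι) {E : Finset (ι × ι)}
    {c : ℕ} (hE : #E ≤ c) : F J E ≤ F J ∅ + c * β := by
  have hunion := hF.subadditive J ∅ ∅ E
  rw [union_empty, empty_union] at hunion
  have hc : (#E : ℝ) * β ≤ c * β :=
    mul_le_mul_of_nonneg_right (mod_cast hE) hF.message_nonneg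
  linarith [hF.messages_le E]

lemma le_of_card_le (hF : IsCodeEntropy k d B α β F) (J : Finset ι) {E : Finset (ι × ι)} {c : ℕ}
    (hE : #E ≤ c) : F J E ≤ #J * α + c * β := by
  linarith [hF.le_add_of_card_le J hE, hF.servers_le J]

lemma union_sent_le (hF : IsCodeEntropy k d B α β F) (J : Finset ι) (E : Finset (ι × ι))
    {E' : Finset (ι × ι)} (hE' : ∀ e ∈ E', e.1 ∈ J) : F J (E ∪ E') ≤ F J E := by
  induction E' using Finset.induction_on with
  | empty => simp
  | insert e E' _ ih =>
    have hsub := hF.add_le_add_of_subset (J := {e.1}) (J' := J) (E := {e}) (E' := E ∪ E')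
      (J₁ := J) (E₁ := E ∪ insert e E') (J₂ := {e.1}) (E₂ := ∅) subset_union_right
      (by grind) (by simpa using hE' e (mem_insert_self e E')) (empty_subset _)
    have hsend : F {e.1} {e} ≤ F {e.1} ∅ := hF.send_le e.1 e.2
    linarith [ih fun x hx ↦ hE' x (mem_insert_of_mem hx)]

lemma insert_repaired_le (hF : IsCodeEntropy k d B α β F) {I : Finset ι} (J : Finset ι) {j : ι}
    {E : Finset (ι × ι)} (hI : d ≤ #I) (hj : j ∉ I) (hE : I ×ˢ {j} ⊆ E) :
    F (insert j J) E ≤ F J E := by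
  have hsub := hF.add_le_add_of_subset (J := {j}) (J' := J) (E := I ×ˢ {j}) (E' := E)
    (J₁ := insert j J) (J₂ := ∅) (insert_eq j J).subset subset_union_right (empty_subset _)
    (subset_inter Subset.rfl hE)
  linarith [hF.repair_le j I hI hj]

end DecidableEq

section LinearOrder

variable {ι : Type*} [LinearOrder ι] {k d : ℕ} {B α β : ℝ} {F : Finset ι → Finset (ι × ι) → ℝ}

lemma union_repaired_le (hF : IsCodeEntropy k d B α β F) {J R Y : Finset ι}
    {E : Finset (ι × ι)} (hcard : d + 1 ≤ #(J ∪ R ∪ Y)) (hE : repairEdges Y R ⊆ E) :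
    F (J ∪ R) E ≤ F J E := by
  induction R using Finset.induction_on_max generalizing Y with
  | empty => simp
  | insert a R hlt ih =>
    rw [repairEdges_insert_of_forall_lt hlt] at hE
    have hrest : F (J ∪ R) E ≤ F J E :=
      ih (by rwa [union_insert, ← insert_union, ← union_insert]) (union_subset_left hE)
    set E' := (J ∪ R) ×ˢ {a}
    have hsent : F (J ∪ R) (E ∪ E') ≤ F (J ∪ R) E :=
      hF.union_sent_le _ _ fun e he ↦ (mem_product.1 he).1
    have hrepair : F (insert a (J ∪ R)) (E ∪ E') ≤ F (J ∪ R) (E ∪ E') := by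
      refine hF.insert_repaired_le (I := (J ∪ insert a R ∪ Y).erase a) _ ?_ (notMem_erase a _) ?_
      · exact (Nat.le_sub_one_of_lt hcard).trans pred_card_le_card_erase
      · rintro ⟨i, j⟩ he
        have hY : (i, j) ∈ Y ×ˢ {a} → (i, j) ∈ E := fun h ↦ union_subset_right hE h
        simp only [E', mem_union, mem_product, mem_erase, mem_insert, mem_singleton] at he hY ⊢
        tauto
    rw [union_insert]
    linarith [hF.mono (Subset.refl (insert a (J ∪ R))) (subset_union_left : E ⊆ E ∪ E')]

lemma exists_recovery_messages (hF : IsCodeEntropy k d B α β F) {D X : Finset ι} (hXD : X ⊆ D)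
    (hD : #D = d + 1) (hX : #X ≤ k) :
    ∃ E : Finset (ι × ι), #E ≤ recoveryCost k d #X ∧ B ≤ F X E := by
  have hkd := hF.k_le_d
  have hDX : #(D \ X) = d + 1 - #X := by rw [card_sdiff_of_subset hXD, hD]
  obtain ⟨R, hRD, hR⟩ := exists_subset_card_eq (s := D \ X) (n := k - #X) (by omega)
  set Y := (D \ X) \ R
  have hY : #Y = d + 1 - k := by rw [card_sdiff_of_subset hRD]; omega
  refine ⟨repairEdges Y R, ?_, ?_⟩
  · simpa only [recoveryCost, hY, hR] using card_repairEdges_le Y R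
  · have hcover : X ∪ R ∪ Y = D := by
      rw [union_assoc, union_sdiff_of_subset hRD, union_sdiff_of_subset hXD]
    have hcard : k ≤ #(X ∪ R) := by
      rw [card_union_of_disjoint (disjoint_sdiff.mono_right hRD)]
      omega
    calc B ≤ F (X ∪ R) ∅ := hF.le_recover _ hcard
      _ ≤ F (X ∪ R) (repairEdges Y R) := hF.mono Subset.rfl (empty_subset _)
      _ ≤ F X (repairEdges Y R) := hF.union_repaired_le (by rw [hcover, hD]) Subset.rfl

/- Each half of `L ∪ K` is repaired from the other one; by submodularity the two ways of computing
`H(W_{L ∪ K})` overlap in `W_{L ∪ K}` itself, from which the file is recovered. -/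
lemma add_le_Bfun_add_of_disjoint (hF : IsCodeEntropy k d B α β F) {L K O : Finset ι}
    (hLK : Disjoint L K) (hD : #(L ∪ K ∪ O) = d + 1) (hk : #(L ∪ K) ≤ k) :
    B + F (L ∪ K) (O ×ˢ (L ∪ K)) ≤ Bfun k d #(L ∪ K) α β +
      (#O * #(L ∪ K) + (#L).choose 2 + (#K).choose 2 : ℕ) * β := by
  have half (L K : Finset ι) (hD : #(L ∪ K ∪ O) = d + 1) :
      F (L ∪ K) (repairEdges O K) ≤ #L * α + (#O * #K + (#K).choose 2 : ℕ) * β :=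
    (hF.union_repaired_le hD.ge Subset.rfl).trans (hF.le_of_card_le L (card_repairEdges_le O K))
  have hK := half L K hD
  have hL := half K L (by rwa [union_comm K])
  rw [union_comm K] at hL
  have hsub : F (L ∪ K) (O ×ˢ (L ∪ K)) + F (L ∪ K) ∅ ≤
      F (L ∪ K) (repairEdges O L) + F (L ∪ K) (repairEdges O K) := by
    refine hF.add_le_add_of_subset subset_union_left ?_ (by simp) (empty_subset _)
    rw [product_union]
    exact union_subset_union subset_union_left subset_union_left
  obtain ⟨E, hE, hB⟩ := hF.exists_recovery_messages subset_union_left hD hk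
  have hrecover := hB.trans (hF.le_add_of_card_le _ hE)
  rw [Bfun_eq_add_recoveryCost]
  have hC : (#(L ∪ K) : ℝ) = #L + #K := mod_cast card_union_of_disjoint hLK
  push_cast at hK hL ⊢
  linear_combination hK + hL + hsub + hrecover - (α + #O * β) * hC

section HelperExchange

variable {C O : Finset ι}

lemma add_messages_le_of_subset (hF : IsCodeEntropy k d B α β F) (hCO : Disjoint C O)
    (hD : #(C ∪ O) = d + 1) {Q : Finset ι} (hQ : Q ⊆ O) (hk : #C + #Q ≤ k) :
    B + F ∅ (Q ×ˢ C) + ((#O - #Q) * #C + ((#C).choose 2 : ℕ)) * β ≤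
      F C (O ×ˢ C) + Bfun k d #Q α β := by
  have hCQ : #(C ∪ Q) = #C + #Q := card_union_of_disjoint (hCO.mono_right hQ)
  obtain ⟨E, hE, hB⟩ :=
    hF.exists_recovery_messages (union_subset_union_right hQ) hD (hCQ.trans_le hk)
  have hsub : F (C ∪ Q) E + F ∅ (Q ×ˢ C) ≤ F C (O ×ˢ C) + F Q (E ∪ Q ×ˢ C) :=
    hF.add_le_add_of_subset Subset.rfl (subset_union_left.trans subset_union_right)
      (empty_subset _) (subset_inter (product_subset_product_left hQ) subset_union_right)
  have hsent : F Q (E ∪ Q ×ˢ C) ≤ F Q E := hF.union_sent_le _ _ fun e he ↦ (mem_product.1 he).1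
  have hQE := hF.le_of_card_le Q hE
  have hO : (#C + #O : ℝ) = d + 1 := by
    rw [card_union_of_disjoint hCO] at hD
    exact_mod_cast hD
  rw [Bfun_eq_add_recoveryCost, recoveryCost_eq_add hk hF.k_le_d]
  rw [hCQ] at hQE
  linear_combination hB + hsub + hsent + hQE + #C * β * hO

lemma exists_recovery_messages_after_repair (hF : IsCodeEntropy k d B α β F) (hCO : Disjoint C O)
    (hD : #(C ∪ O) = d + 1) {V : Finset ι} (hV : V ⊆ O) (hk : #C + #V ≤ k) :
    ∃ E : Finset (ι × ι), #E ≤ recoveryCost k d (#C + #V) ∧ B ≤ F V (repairEdges O C ∪ E) := by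
  have hVC : #(V ∪ C) = #C + #V := by
    rw [card_union_of_disjoint (hCO.mono_right hV).symm, add_comm]
  obtain ⟨E, hE, hB⟩ := hF.exists_recovery_messages (D := C ∪ O) (X := V ∪ C)
    (union_subset (hV.trans subset_union_right) subset_union_left) hD (hVC.trans_le hk)
  have hcover : d + 1 ≤ #(V ∪ C ∪ O) :=
    hD.ge.trans (card_le_card (union_subset_union_left subset_union_right))
  exact ⟨E, hVC ▸ hE, hB.trans <| (hF.mono Subset.rfl subset_union_right).trans <|
    hF.union_repaired_le hcover subset_union_left⟩

/- `W_V` determines the messages from `V`, so next to `S_P^C` it suffices to add to it the messages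
into `C` from outside `P ∪ V`; what `W_V` and `S_P^C` are then known to share is `S_{P ∩ V}^C`. -/
lemma add_messages_inter_le (hF : IsCodeEntropy k d B α β F) (hCO : Disjoint C O)
    (hD : #(C ∪ O) = d + 1) {P V : Finset ι} (hP : P ⊆ O) (hV : V ⊆ O) (hk : #C + #V ≤ k) :
    B + (F ∅ ((P ∩ V) ×ˢ C) - #(P ∩ V) * #C * β) ≤
      (F ∅ (P ×ˢ C) - #P * #C * β) + Bfun k d #V α β := by
  obtain ⟨E, hE, hB⟩ := hF.exists_recovery_messages_after_repair hCO hD hV hk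
  set Y := O \ (P ∪ V)
  set E' := repairEdges Y C ∪ E
  have hcover : repairEdges O C ∪ E ⊆ P ×ˢ C ∪ (E' ∪ V ×ˢ C) := fun e he ↦ by
    simp only [E', Y, mem_repairEdges, mem_union, mem_product, mem_sdiff] at he ⊢
    tauto
  have hsub : F V (repairEdges O C ∪ E) + F ∅ ((P ∩ V) ×ˢ C) ≤
      F ∅ (P ×ˢ C) + F V (E' ∪ V ×ˢ C) :=
    hF.add_le_add_of_subset subset_union_right hcover (empty_subset _)
      (subset_inter (product_subset_product_left inter_subset_left)
        ((product_subset_product_left inter_subset_right).trans subset_union_right))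
  have hsent : F V (E' ∪ V ×ˢ C) ≤ F V E' := hF.union_sent_le _ _ fun e he ↦ (mem_product.1 he).1
  have hVE' := hF.le_of_card_le V <|
    (card_union_le _ _).trans (add_le_add (card_repairEdges_le Y C) hE)
  have hY : (#Y + #P + #V + #C : ℝ) = d + 1 + #(P ∩ V) := by
    have hO := card_union_of_disjoint hCO
    have hsdiff : #Y + #(P ∪ V) = #O := card_sdiff_add_card_eq_card (union_subset hP hV)
    have hPV := card_union_add_card_inter P V
    exact_mod_cast (by omega : #Y + #P + #V + #C = d + 1 + #(P ∩ V))
  rw [Bfun_eq_add_recoveryCost, recoveryCost_eq_add hk hF.k_le_d]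
  push_cast at hVE'
  linear_combination hsub + hsent + hB + hVE' + #C * β * hY

lemma card_mul_add_messages_inf_le [Fintype ι] (hF : IsCodeEntropy k d B α β F)
    (hCO : Disjoint C O) (hD : #(C ∪ O) = d + 1) {Q : Finset ι} (hQ : Q ⊆ O) {κ : Type*}
    {V : κ → Finset ι} (hV : ∀ i, V i ⊆ O) (hk : ∀ i, #C + #(V i) ≤ k) (s : Finset κ) :
    #s * B + (F ∅ ((Q ∩ s.inf V) ×ˢ C) - #(Q ∩ s.inf V) * #C * β) ≤
      (F ∅ (Q ×ˢ C) - #Q * #C * β) + ∑ i ∈ s, Bfun k d #(V i) α β := by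
  classical
  induction s using Finset.induction_on with
  | empty => simp
  | insert a s ha ih =>
    have hstep := hF.add_messages_inter_le hCO hD (inter_subset_left.trans hQ) (hV a) (hk a)
      (P := Q ∩ s.inf V)
    have hinter : Q ∩ (insert a s).inf V = Q ∩ s.inf V ∩ V a := by
      rw [inf_insert, inf_eq_inter, inter_comm (V a), inter_assoc]
    rw [hinter, sum_insert ha, card_insert_of_notMem ha, Nat.cast_succ]
    linarith

end HelperExchange

theorem first_outer_bound [Fintype ι] (hF : IsCodeEntropy k d B α β F) {L K O Q : Finset ι}
    (hLK : Disjoint L K) (hO : Disjoint (L ∪ K) O) (hD : #(L ∪ K ∪ O) = d + 1) (hQ : Q ⊆ O)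
    (hQk : #(L ∪ K) + #Q ≤ k) {κ : Type*} [Fintype κ] {V : κ → Finset ι} (hV : ∀ i, V i ⊆ O)
    (hVk : ∀ i, #(L ∪ K) + #(V i) ≤ k) (hQV : Disjoint Q (univ.inf V)) :
    (Fintype.card κ + 2) * B ≤ Bfun k d #Q α β + ∑ i, Bfun k d #(V i) α β
      + Bfun k d #(L ∪ K) α β - #L * #K * β := by
  have hparts := hF.add_le_Bfun_add_of_disjoint hLK hD (le_of_add_le_left hQk)
  have hhelpers := hF.add_messages_le_of_subset hO hD hQ hQk
  have hinf := hF.card_mul_add_messages_inf_le hO hD hQ hV hVk univ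
  rw [disjoint_iff_inter_eq_empty.1 hQV, empty_product, hF.empty, card_univ] at hinf
  have hchoose : ((#(L ∪ K)).choose 2 : ℝ) = (#L).choose 2 + (#K).choose 2 + #L * #K := by
    rw [card_union_of_disjoint hLK]
    push_cast [Nat.cast_choose_two]
    ring
  push_cast at hparts hinf
  simp only [card_empty, Nat.cast_zero] at hinf
  linear_combination hparts + hhelpers + hinf - β * hchoose

end LinearOrder

end IsCodeEntropy

lemma card_filter_le_val_and_val_lt {n a b : ℕ} (hb : b ≤ n) :
    #{x : Fin n | a ≤ (x : ℕ) ∧ (x : ℕ) < b} = b - a := by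
  rw [← Nat.card_Ico, ← card_map Fin.valEmbedding]
  congr 1
  ext x
  simp only [mem_map, mem_filter_univ, Fin.valEmbedding_apply, mem_Ico]
  exact ⟨by rintro ⟨y, hy, rfl⟩; exact hy, fun hx ↦ ⟨⟨x, hx.2.trans_le hb⟩, hx, rfl⟩⟩

theorem stmt_4_general {Ω : Type*} [Fintype Ω] {n k d : ℕ} {B α β : ℝ} {P : Ω → ℝ}
    {σM : Type*} {σW : Fin n → Type*} {σS : Fin n → Fin n → Type*}
    {M : Ω → σM} {W : ∀ j, Ω → σW j} {S : ∀ i j, Ω → σS i j}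
    (hcode : IsRegenCode n k d B α β P M W S)
    {q ℓ m : ℕ} (hqlm : q + ℓ + m ≤ k) {O : Finset (Fin n)} (hO : #O = d + 1 - (ℓ + m))
    {κ : Type*} [Fintype κ] {V : κ → Finset (Fin n)} (hVO : ∀ i, V i ⊆ O)
    (hVcard : ∀ i, ℓ + m + #(V i) ≤ k) (hVinter : q + #(univ.inf V) ≤ #O) :
    (Fintype.card κ + 2) * B ≤ Bfun k d q α β + ∑ i, Bfun k d #(V i) α β
      + Bfun k d (ℓ + m) α β - ℓ * m * β := by
  have hkd := hcode.hkd
  have hdn := hcode.hdn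
  have hOc : #Oᶜ = n - #O := by rw [card_compl, Fintype.card_fin]
  obtain ⟨C, hCO, hC⟩ := exists_subset_card_eq (s := Oᶜ) (n := ℓ + m) (by omega)
  obtain ⟨L, hLC, rfl⟩ := exists_subset_card_eq (s := C) (n := ℓ) (by omega)
  obtain ⟨Q, hQO, rfl⟩ := exists_subset_card_eq (s := O \ univ.inf V) (n := q)
    ((Nat.le_sub_of_add_le hVinter).trans (le_card_sdiff _ _))
  have hK : #(C \ L) = m := by rw [card_sdiff_of_subset hLC, hC, Nat.add_sub_cancel_left]
  have hdisj : Disjoint C O := subset_compl_iff_disjoint_right.1 hCO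
  have hD : #(C ∪ O) = d + 1 := by rw [card_union_of_disjoint hdisj]; omega
  rw [← union_sdiff_of_subset hLC] at hdisj hD hC
  simpa only [hC, hK] using hcode.isCodeEntropy.first_outer_bound disjoint_sdiff hdisj hD
    (hQO.trans sdiff_subset) (by omega) hVO (hC ▸ hVcard) (disjoint_sdiff_self_left.mono_left hQO)

/-- first outer bound, Theorem `thm-rs`: for positive `q, ℓ, m` with
`q + ℓ + m ≤ k`, `N ≥ 3`, and subsets `V_1,…,V_{N-2}` of `{ℓ+m+1,…,d+1}` (server `t` of
the paper is index `t-1`) of sizes `q_i ≤ k - ℓ - m` with empty intersection,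
`N·B ≤ B_q + Σ B_{q_i} + B_{ℓ+m} - ℓmβ`. -/
theorem stmt_4 {Ω : Type*} [Fintype Ω] {n k d : ℕ} {B α β : ℝ} {P : Ω → ℝ}
    {σM : Type*} {σW : Fin n → Type*} {σS : Fin n → Fin n → Type*}
    {M : Ω → σM} {W : ∀ j, Ω → σW j} {S : ∀ i j, Ω → σS i j}
    (hcode : IsRegenCode n k d B α β P M W S)
    (q ℓ m : ℕ) (hq : 1 ≤ q) (hℓ : 1 ≤ ℓ) (hm : 1 ≤ m) (hqlm : q + ℓ + m ≤ k)
    (N : ℕ) (hN : 3 ≤ N)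
    (V : Fin (N - 2) → Finset (Fin n))
    (hVsub : ∀ i, V i ⊆ Finset.univ.filter (fun x : Fin n => ℓ + m ≤ (x : ℕ) ∧ (x : ℕ) < d + 1))
    (hVcard : ∀ i, 1 ≤ (V i).card ∧ (V i).card ≤ k - ℓ - m)
    (hVinter : Finset.univ.inf V = ∅) :
    (N : ℝ) * B ≤ Bfun k d q α β + ∑ i, Bfun k d (V i).card α β
      + Bfun k d (ℓ + m) α β - (ℓ : ℝ) * (m : ℝ) * β := by
  have hcard : #{x : Fin n | ℓ + m ≤ (x : ℕ) ∧ (x : ℕ) < d + 1} = d + 1 - (ℓ + m) :=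
    card_filter_le_val_and_val_lt hcode.hdn
  have hN' : ((N - 2 : ℕ) : ℝ) + 2 = N := by exact_mod_cast Nat.sub_add_cancel (by omega : 2 ≤ N)
  have hkd := hcode.hkd
  simpa only [Fintype.card_fin, hN'] using stmt_4_general hcode hqlm hcard hVsub
    (fun i ↦ by have := (hVcard i).2; omega) (by rw [hVinter, card_empty]; omega)
end
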